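/- Let G be a finite simple graph with vertex set partitioned into W and T such that T is an independent set, every vertex of T has all its neighbours in W and has degree at least 1, and distinct vertices of T have distinct neighbourhoods. Let T₃ = {v ∈ T : d_G(v) ≥ 3}, and suppose that the number of edges of G joining T₃ to W is at most 2·(|T₃| + |W|) − 4 whenever T₃ is nonempty (as holds when G is planar). Then 2·|V(G)| ≤ |W|² + 7·|W|. -/

import Mathlib

/-!
The vertices of `T` are counted by degree. Since a vertex of `T` is determined by its
neighbourhood, which is a subset of `W`, there are at most `|W|.choose k` vertices of `T` of
degree `k`; this is used for `k = 1, 2` (`card_filter_degree_eq_le_choose`). Each vertex of `T₃`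
sends at least three edges to `W`, and these edges are distinct because `T₃` and `W` are disjoint
(`three_mul_card_le_card_edges`), so the edge bound gives `3|T₃| ≤ 2(|T₃| + |W|) - 4` and hence
`|T₃| ≤ 2|W|`. Altogether `|V| ≤ |W| + |W| + |W|(|W| - 1)/2 + 2|W|`.
-/

theorem card_filter_degree_eq_le_choose {V : Type*} [Fintype V] [DecidableEq V]
    (G : SimpleGraph V) [DecidableRel G.Adj] (W T : Finset V)
    (hnbr : ∀ v ∈ T, ∀ u : V, G.Adj v u → u ∈ W)
    (hdistinct : ∀ u ∈ T, ∀ v ∈ T, u ≠ v → G.neighborFinset u ≠ G.neighborFinset v) (k : ℕ) :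
    (T.filter (fun v => G.degree v = k)).card ≤ W.card.choose k := by
  rw [← Finset.card_powersetCard]
  refine Finset.card_le_card_of_injOn (fun v => G.neighborFinset v) ?_ ?_
  · intro v hv
    simp only [Finset.coe_filter, Set.mem_ofPred_eq] at hv
    simp only [Finset.mem_coe, Finset.mem_powersetCard]
    exact ⟨fun u hu => hnbr v hv.1 u ((G.mem_neighborFinset v u).1 hu), hv.2⟩
  · intro u hu v hv huv
    simp only [Finset.coe_filter, Set.mem_ofPred_eq] at hu hv
    by_contra hne
    exact hdistinct u hu.1 v hv.1 hne huv

theorem three_mul_card_le_card_edges {V : Type*} [Fintype V] [DecidableEq V]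
    (G : SimpleGraph V) [DecidableRel G.Adj] (W S : Finset V) (hdisj : Disjoint W S)
    (hnbr : ∀ v ∈ S, ∀ u : V, G.Adj v u → u ∈ W) (hdeg : ∀ v ∈ S, 3 ≤ G.degree v) :
    3 * S.card ≤ (G.edgeFinset.filter (fun e => ∃ u ∈ S, ∃ w ∈ W, e = s(u, w))).card := by
  calc 3 * S.card = ∑ _v ∈ S, 3 := by simp [mul_comm]
    _ ≤ ∑ v ∈ S, (G.neighborFinset v).card := Finset.sum_le_sum hdeg
    _ = (S.sigma fun v => G.neighborFinset v).card := (Finset.card_sigma _ _).symm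
    _ ≤ _ := by
      refine Finset.card_le_card_of_injOn (fun p => s(p.1, p.2)) ?_ ?_
      · rintro ⟨v, u⟩ h
        simp only [Finset.mem_coe, Finset.mem_sigma, SimpleGraph.mem_neighborFinset] at h
        simp only [Finset.mem_coe, Finset.mem_filter, SimpleGraph.mem_edgeFinset,
          SimpleGraph.mem_edgeSet]
        exact ⟨h.2, v, h.1, u, hnbr v h.1 u h.2, rfl⟩
      · rintro ⟨v, u⟩ h ⟨v', u'⟩ h' he
        simp only [Finset.mem_coe, Finset.mem_sigma, SimpleGraph.mem_neighborFinset] at h h'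
        rcases Sym2.eq_iff.1 he with ⟨h1, h2⟩ | ⟨h1, -⟩
        · simp only at h1 h2
          rw [h1, h2]
        -- A swapped pair would put `v` in both `S` and `W`.
        · simp only at h1
          exact absurd h.1 (Finset.disjoint_left.1 hdisj (h1 ▸ hnbr v' h'.1 u' h'.2))


/-- kernel size bound. Let the vertex set of `G` be partitioned into
`W` and `T` such that `T` is an independent set, every vertex of `T` has all its
neighbours in `W` and degree at least `1`, and distinct vertices of `T` have distinct
neighbourhoods. Let `T₃` be the set of vertices of `T` of degree at least `3`, and
suppose that the number of edges joining `T₃` to `W` is at most `2(|T₃| + |W|) - 4`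
whenever `T₃` is nonempty. Then `2|V(G)| ≤ |W|² + 7|W|`. -/
theorem kernel_size_bound {V : Type*} [Fintype V] [DecidableEq V]
    (G : SimpleGraph V) [DecidableRel G.Adj]
    (W T : Finset V) (hunion : W ∪ T = Finset.univ) (hdisj : Disjoint W T)
    (hind : ∀ u ∈ T, ∀ v ∈ T, ¬ G.Adj u v)
    (hnbr : ∀ v ∈ T, ∀ u : V, G.Adj v u → u ∈ W)
    (hdeg : ∀ v ∈ T, 1 ≤ G.degree v)
    (hdistinct : ∀ u ∈ T, ∀ v ∈ T, u ≠ v → G.neighborFinset u ≠ G.neighborFinset v)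
    (T3 : Finset V) (hT3 : T3 = T.filter (fun v => 3 ≤ G.degree v))
    (hplanar : T3.Nonempty →
      (((G.edgeFinset.filter (fun e => ∃ u ∈ T3, ∃ w ∈ W, e = s(u, w))).card : ℤ)
        ≤ 2 * ((T3.card : ℤ) + (W.card : ℤ)) - 4)) :
    2 * Fintype.card V ≤ W.card ^ 2 + 7 * W.card := by
  have hV : Fintype.card V = W.card + T.card := by
    rw [← Finset.card_univ, ← hunion, Finset.card_union_of_disjoint hdisj]
  have h1 := card_filter_degree_eq_le_choose G W T hnbr hdistinct 1
  have h2 := card_filter_degree_eq_le_choose G W T hnbr hdistinct 2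
  have hsub : T3 ⊆ T := hT3 ▸ Finset.filter_subset _ _
  have h3 : T3.card ≤ 2 * W.card := by
    rcases T3.eq_empty_or_nonempty with h | h
    · simp [h]
    · have hp := hplanar h
      have he := three_mul_card_le_card_edges G W T3 (hdisj.mono_right hsub)
        (fun v hv => hnbr v (hsub hv)) (fun v hv => by
          rw [hT3] at hv
          exact (Finset.mem_filter.1 hv).2)
      omega
  have hT : T.card ≤ (T.filter (fun v => G.degree v = 1)).card
      + (T.filter (fun v => G.degree v = 2)).card + T3.card := by
    have hcover : T ⊆ (T.filter (fun v => G.degree v = 1)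
        ∪ T.filter (fun v => G.degree v = 2)) ∪ T3 := by
      intro v hv
      have := hdeg v hv
      simp only [hT3, Finset.mem_union, Finset.mem_filter, hv, true_and]
      omega
    exact (Finset.card_le_card hcover).trans ((Finset.card_union_le _ _).trans
      (Nat.add_le_add_right (Finset.card_union_le _ _) _))
  rw [Nat.choose_one_right] at h1
  -- `2 * choose w 2 + w = w ^ 2`, stated additively to avoid truncated subtraction.
  have hc : 2 * W.card.choose 2 + W.card = W.card ^ 2 := by
    generalize W.card = n
    induction n with
    | zero => rfl
    | succ n ih =>
      rw [Nat.choose_succ_succ' n 1, Nat.choose_one_right]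
      linarith [add_sq n 1]
  omega
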